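/- arXiv:2010.10414 — 2 statements merged into one kernel-verified Lean document; each statement's English description precedes it below -/
import Mathlib

section
/- Let A be a group and let K be a finitely generated residually finite group that admits a decomposition as a free product of two nontrivial groups. Suppose S is a finitely presented subdirect product of A × K whose intersection with {1} × K is nontrivial. Then L = S ∩ (A × {1}), regarded as a subgroup of A, is finitely generated. -/
/-- A subgroup `S` of `A × K` is a subdirect product if both coordinate
projections map `S` onto `A` and onto `K`. -/
def IsSubdirect {A K : Type*} [Group A] [Group K] (S : Subgroup (A × K)) : Prop :=
  S.map (MonoidHom.fst A K) = ⊤ ∧ S.map (MonoidHom.snd A K) = ⊤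

/-- A group is residually finite if every nontrivial element is detected by a
homomorphism to a finite group. -/
def ResiduallyFinite (G : Type*) [Group G] : Prop :=
  ∀ g : G, g ≠ 1 → ∃ (Q : Type) (_ : Group Q) (_ : Finite Q) (π : G →* Q), π g ≠ 1

/-- A group admits a decomposition as a free product of two nontrivial groups. -/
def HasFreeProductDecomp (G : Type*) [Group G] : Prop :=
  ∃ (B C : Type) (_ : Group B) (_ : Group C) (_ : Nontrivial B) (_ : Nontrivial C),
    Nonempty (G ≃* Monoid.Coprod B C)

/-- A group is finitely presented: a finitely generated free group surjects onto it with
kernel the normal closure of finitely many relators. -/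
def FinitelyPresentedGroup (G : Type*) [Group G] : Prop :=
  ∃ (n : ℕ) (rels : Finset (FreeGroup (Fin n))) (f : FreeGroup (Fin n) →* G),
    Function.Surjective f ∧ f.ker = Subgroup.normalClosure (rels : Set (FreeGroup (Fin n)))

open Monoid Filter

section Generation

variable {G : Type*} [Group G]

/-- A subgroup normalized by a generating family of subgroups is normal. -/
theorem Subgroup.normal_of_conj_mem_of_iSup {ι : Sort*} {P : ι → Subgroup G} (hP : ⨆ i, P i = ⊤)
    {Z : Subgroup G} (hZ : ∀ i, ∀ p ∈ P i, ∀ z ∈ Z, p * z * p⁻¹ ∈ Z) : Z.Normal := by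
  rw [← Subgroup.normalizer_eq_top_iff, eq_top_iff, ← hP, iSup_le_iff]
  intro i p hp
  rw [Subgroup.mem_normalizer_iff]
  refine fun z => ⟨hZ i p hp z, fun hz => ?_⟩
  have := hZ i p⁻¹ (inv_mem hp) _ hz
  simpa [mul_assoc] using this

/-- If `ψ` is onto and kills `Q`, where `P` and `Q` generate, then the quotient map by `Z`,
restricted to `P`, factors through `ψ` as soon as `Z` contains `P ⊓ ψ.ker`. -/
theorem exists_hom_quotient_of_sup_eq_top {X : Type*} [Group X] (ψ : G →* X)
    (hψ : Function.Surjective ψ) {P Q : Subgroup G} (hPQ : P ⊔ Q = ⊤) (hQ : Q ≤ ψ.ker)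
    (Z : Subgroup G) [Z.Normal] (hZ : P ⊓ ψ.ker ≤ Z) :
    ∃ f : X →* G ⧸ Z, ∀ p ∈ P, f (ψ p) = (p : G ⧸ Z) := by
  have hsurj : Function.Surjective (ψ.comp P.subtype) := by
    rw [← MonoidHom.range_eq_top, MonoidHom.range_comp, Subgroup.range_subtype, eq_top_iff,
      ← MonoidHom.range_eq_top.2 hψ, MonoidHom.range_eq_map, ← hPQ, Subgroup.map_sup,
      (Subgroup.map_eq_bot_iff Q).2 hQ, sup_bot_eq]
  refine ⟨(ψ.comp P.subtype).liftOfSurjective hsurj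
    ⟨(QuotientGroup.mk' Z).comp P.subtype, fun p hp => ?_⟩, fun p hp => ?_⟩
  · simpa [MonoidHom.mem_ker] using hZ ⟨p.2, hp⟩
  · exact MonoidHom.liftOfRightInverse_comp_apply (ψ.comp P.subtype) _ _
      ⟨(QuotientGroup.mk' Z).comp P.subtype, _⟩ ⟨p, hp⟩

end Generation

section FactorPreimage

variable {G B C : Type*} [Group G] [Group B] [Group C]

/-- The preimages under `π` of the two free factors of `B ∗ C`. -/
def factorPreimage (π : G →* Coprod B C) (b : Bool) : Subgroup G :=
  (bif b then (Coprod.inl : B →* Coprod B C).range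
    else (Coprod.inr : C →* Coprod B C).range).comap π

theorem ker_le_factorPreimage (π : G →* Coprod B C) (b : Bool) : π.ker ≤ factorPreimage π b :=
  Subgroup.ker_le_comap ..

theorem iSup_factorPreimage (π : G →* Coprod B C) (hπ : Function.Surjective π) :
    ⨆ b, factorPreimage π b = ⊤ := by
  rw [iSup_bool_eq]
  simp only [factorPreimage, cond_true, cond_false]
  rw [Subgroup.comap_sup_eq π _ _ hπ, Coprod.range_inl_sup_range_inr, Subgroup.comap_top]

/-- If subgroups of the preimages of the free factors generate, then the kernel of `π` is
normally generated by its intersections with them. -/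
theorem ker_le_of_inf_ker_le (π : G →* Coprod B C) (hπ : Function.Surjective π)
    {P : Bool → Subgroup G} (hP : ⨆ b, P b = ⊤) (hPπ : ∀ b, P b ≤ factorPreimage π b)
    {Z : Subgroup G} (hZ : ∀ b, ∀ p ∈ P b, ∀ z ∈ Z, p * z * p⁻¹ ∈ Z)
    (hker : ∀ b, P b ⊓ π.ker ≤ Z) : π.ker ≤ Z := by
  have : Z.Normal := Subgroup.normal_of_conj_mem_of_iSup hP hZ
  have hinl : ∀ p ∈ P true, ∃ b : B, Coprod.inl b = π p := fun p hp => hPπ true hp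
  have hinr : ∀ p ∈ P false, ∃ c : C, Coprod.inr c = π p := fun p hp => hPπ false hp
  have hsup : P true ⊔ P false = ⊤ := by rw [← hP, iSup_bool_eq]
  obtain ⟨f, hf⟩ := exists_hom_quotient_of_sup_eq_top ((Coprod.fst : Coprod B C →* B).comp π)
    (Coprod.fst_surjective.comp hπ) hsup
    (fun p hp => by obtain ⟨c, hc⟩ := hinr p hp; simp [MonoidHom.mem_ker, ← hc]) Z (by
      rintro p ⟨hp, hp'⟩
      refine hker true ⟨hp, ?_⟩
      obtain ⟨b, hb⟩ := hinl p hp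
      have : b = 1 := by simpa [MonoidHom.mem_ker, ← hb] using hp'
      simp [← hb, this])
  obtain ⟨g, hg⟩ := exists_hom_quotient_of_sup_eq_top ((Coprod.snd : Coprod B C →* C).comp π)
    (Coprod.snd_surjective.comp hπ) (sup_comm (P true) _ ▸ hsup)
    (fun p hp => by obtain ⟨c, hc⟩ := hinl p hp; simp [MonoidHom.mem_ker, ← hc]) Z (by
      rintro p ⟨hp, hp'⟩
      refine hker false ⟨hp, ?_⟩
      obtain ⟨b, hb⟩ := hinr p hp
      have : b = 1 := by simpa [MonoidHom.mem_ker, ← hb] using hp'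
      simp [← hb, this])
  have hcomp : ((Coprod.lift f g).comp π).eqLocus (QuotientGroup.mk' Z) = ⊤ := by
    rw [eq_top_iff, ← hsup, sup_le_iff]
    constructor
    · intro p hp
      obtain ⟨b, hb⟩ := hinl p hp
      have := hf p hp
      change Coprod.lift f g (π p) = (p : G ⧸ Z)
      simpa [← hb] using this
    · intro p hp
      obtain ⟨b, hb⟩ := hinr p hp
      have := hg p hp
      change Coprod.lift f g (π p) = (p : G ⧸ Z)
      simpa [← hb] using this
  intro x hx
  have hx' : Coprod.lift f g (π x) = (x : G ⧸ Z) := (hcomp ▸ Subgroup.mem_top x :)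
  rw [MonoidHom.mem_ker.1 hx, map_one] at hx'
  exact (QuotientGroup.eq_one_iff x).1 hx'.symm

end FactorPreimage

section AlternatingProducts

variable {G : Type*} [Group G]

/-- `IsAltProd U i j g` says that `g` is a nonempty product of elements taken alternately from
`U true` and `U false`, the first one from `U i` and the last one from `U j`. -/
inductive IsAltProd (U : Bool → Set G) : Bool → Bool → G → Prop
  | single {i : Bool} {x : G} (hx : x ∈ U i) : IsAltProd U i i x
  | cons {i k j : Bool} {x y : G} (hx : x ∈ U i) (hik : i ≠ k) (hy : IsAltProd U k j y) :
      IsAltProd U i j (x * y)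

namespace IsAltProd

variable {U : Bool → Set G} {i j k l : Bool} {x y : G}

theorem append (hx : IsAltProd U i j x) (hjk : j ≠ k) (hy : IsAltProd U k l y) :
    IsAltProd U i l (x * y) := by
  induction hx with
  | single hx => exact cons hx hjk hy
  | cons hx hik _ ih => rw [mul_assoc]; exact cons hx hik (ih hjk)

theorem inv (hU : ∀ i, ∀ x ∈ U i, x⁻¹ ∈ U i) (hx : IsAltProd U i j x) :
    IsAltProd U j i x⁻¹ := by
  induction hx with
  | single hx => exact single (hU _ _ hx)
  | cons hx hik _ ih => rw [mul_inv_rev]; exact ih.append hik.symm (single (hU _ _ hx))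

theorem map {G' : Type*} [Group G'] {U' : Bool → Set G'} (f : G →* G')
    (hf : ∀ i, ∀ x ∈ U i, f x ∈ U' i) (hx : IsAltProd U i j x) : IsAltProd U' i j (f x) := by
  induction hx with
  | single hx => exact single (hf _ _ hx)
  | cons hx hik _ ih => rw [map_mul]; exact cons (hf _ _ hx) hik ih

theorem eventually {α : Type*} {F : Filter α} {V : α → Bool → Set G}
    (hV : ∀ i, ∀ x ∈ U i, ∀ᶠ a in F, x ∈ V a i) (hx : IsAltProd U i j x) :
    ∀ᶠ a in F, IsAltProd (V a) i j x := by
  induction hx with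
  | single hx => filter_upwards [hV _ _ hx] with a ha using single ha
  | cons hx hik _ ih => filter_upwards [hV _ _ hx, ih] with a ha ha' using cons ha hik ha'

variable {H : Bool → Subgroup G} {L : Subgroup G}

theorem mul_left_of_mem (hL : ∀ i, L ≤ H i) {a : G} (ha : a ∈ L)
    (hx : IsAltProd (fun i => (H i : Set G) \ L) i j x) :
    IsAltProd (fun i => (H i : Set G) \ L) i j (a * x) := by
  have key : ∀ {i x}, x ∈ (H i : Set G) \ L → a * x ∈ (H i : Set G) \ L := fun {i x} hx =>
    ⟨mul_mem (hL i ha) hx.1, fun h => hx.2 ((Subgroup.mul_mem_cancel_left L ha).1 h)⟩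
  cases hx with
  | single hx => exact single (key hx)
  | cons hx hik hy => rw [← mul_assoc]; exact cons (key hx) hik hy

theorem mul_left (hL : ∀ i, L ≤ H i) {a : G} (ha : a ∈ H k)
    (hx : x ∈ L ∨ ∃ i j, IsAltProd (fun i => (H i : Set G) \ L) i j x) :
    a * x ∈ L ∨ ∃ i j, IsAltProd (fun i => (H i : Set G) \ L) i j (a * x) := by
  by_cases haL : a ∈ L
  · rcases hx with hx | ⟨i, j, hx⟩
    · exact .inl (mul_mem haL hx)
    · exact .inr ⟨i, j, hx.mul_left_of_mem hL haL⟩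
  rcases hx with hx | ⟨i, j, hx⟩
  · exact .inr ⟨k, k, single ⟨mul_mem ha (hL k hx),
      fun h => haL ((Subgroup.mul_mem_cancel_right L hx).1 h)⟩⟩
  by_cases hki : k = i
  · subst hki
    cases hx with
    | single hx =>
      by_cases h : a * x ∈ L
      · exact .inl h
      · exact .inr ⟨k, k, single ⟨mul_mem ha hx.1, h⟩⟩
    | cons hx hik hy =>
      rename_i u v w
      right
      rw [← mul_assoc]
      by_cases h : a * v ∈ L
      · exact ⟨_, _, hy.mul_left_of_mem hL h⟩
      · exact ⟨_, _, cons ⟨mul_mem ha hx.1, h⟩ hik hy⟩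
  · exact .inr ⟨k, j, cons ⟨ha, haL⟩ hki hx⟩

/-- An element outside `L` is an alternating product of elements of `H i \ L`, provided the
subgroups `H i` contain `L` and generate. -/
theorem exists_of_notMem (hL : ∀ i, L ≤ H i) (hH : ⨆ i, H i = ⊤) (hx : x ∉ L) :
    ∃ i j, IsAltProd (fun i => (H i : Set G) \ L) i j x := by
  suffices x ∈ L ∨ ∃ i j, IsAltProd (fun i => (H i : Set G) \ L) i j x from this.resolve_left hx
  have hx' : x ∈ Subgroup.closure (⋃ i, (H i : Set G)) := by
    rw [Subgroup.closure_iUnion]; simp [hH]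
  induction hx' using Subgroup.closure_induction_left with
  | one => exact .inl (one_mem L)
  | mul_left a ha y _ ih =>
    obtain ⟨k, hk⟩ := Set.mem_iUnion.1 ha
    by_cases hy : y ∈ L
    · exact mul_left hL hk (.inl hy)
    · exact mul_left hL hk (ih hy)
  | inv_mul_cancel a ha y _ ih =>
    obtain ⟨k, hk⟩ := Set.mem_iUnion.1 ha
    by_cases hy : y ∈ L
    · exact mul_left hL (inv_mem hk) (.inl hy)
    · exact mul_left hL (inv_mem hk) (ih hy)

end IsAltProd

end AlternatingProducts

namespace Monoid.PushoutI

variable {G : Bool → Type*} {Λ : Type*} [∀ i, Group (G i)] [Group Λ] {φ : ∀ i, Λ →* G i}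

variable (φ) in
/-- The elements of the `i`-th factor of a pushout which do not come from the base group. -/
def offBase (i : Bool) : Set (PushoutI φ) := of i '' {x | x ∉ (φ i).range}

theorem inv_mem_offBase (i : Bool) (g : PushoutI φ) (hg : g ∈ offBase φ i) :
    g⁻¹ ∈ offBase φ i := by
  obtain ⟨x, hx, rfl⟩ := hg
  exact ⟨x⁻¹, fun h => hx (inv_mem_iff.1 h), map_inv _ _⟩

theorem exists_neWord_of_isAltProd {i j : Bool} {g : PushoutI φ}
    (hg : IsAltProd (offBase φ) i j g) :
    ∃ w : CoprodI.NeWord G i j, Reduced φ w.toWord ∧ ofCoprodI w.prod = g := by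
  have hne : ∀ {i} {x : G i}, x ∉ (φ i).range → x ≠ 1 := fun hx h => hx (h ▸ one_mem _)
  induction hg with
  | single hx =>
    obtain ⟨x, hx, rfl⟩ := hx
    exact ⟨.singleton x (hne hx), by simpa [Reduced, CoprodI.NeWord.toWord] using hx, by simp⟩
  | cons hx hik _ ih =>
    obtain ⟨x, hx, rfl⟩ := hx
    obtain ⟨w, hw, rfl⟩ := ih
    refine ⟨.append (.singleton x (hne hx)) hik w, fun p hp => ?_, by simp⟩
    rcases List.mem_append.1 hp with hp | hp
    · obtain rfl := List.mem_singleton.1 hp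
      exact hx
    · exact hw p hp

theorem notMem_range_base_of_isAltProd (hφ : ∀ i, Function.Injective (φ i)) {i j : Bool}
    {g : PushoutI φ} (hg : IsAltProd (offBase φ) i j g) : g ∉ (base φ).range := by
  obtain ⟨w, hw, rfl⟩ := exists_neWord_of_isAltProd hg
  intro h
  exact w.toList_ne_nil (congrArg CoprodI.Word.toList (hw.eq_empty_of_mem_range hφ h))

theorem mem_range_base_or_isAltProd {i : Bool} {g : PushoutI φ} (hg : g ∈ (of (φ := φ) i).range) :
    g ∈ (base φ).range ∨ IsAltProd (offBase φ) i i g := by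
  obtain ⟨x, rfl⟩ := hg
  by_cases hx : x ∈ (φ i).range
  · obtain ⟨y, rfl⟩ := hx
    exact .inl ⟨y, (of_apply_eq_base φ i y).symm⟩
  · exact .inr (.single ⟨x, hx, rfl⟩)

theorem range_base_le_range_of (i : Bool) : (base φ).range ≤ (of (φ := φ) i).range := by
  rintro _ ⟨y, rfl⟩
  exact ⟨φ i y, of_apply_eq_base φ i y⟩

theorem conj_mem_of_isAltProd_of_ne {i j k : Bool} {w g : PushoutI φ}
    (hw : IsAltProd (offBase φ) i j w) (hki : k ≠ i)
    (hg : g ∈ (base φ).range ∨ IsAltProd (offBase φ) k k g) :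
    w⁻¹ * g * w ∈ (base φ).range ∨ IsAltProd (offBase φ) j j (w⁻¹ * g * w) := by
  have letter : ∀ {i k : Bool} {x g : PushoutI φ}, x ∈ offBase φ i → k ≠ i →
      (g ∈ (base φ).range ∨ IsAltProd (offBase φ) k k g) →
      (x⁻¹ * g * x ∈ (base φ).range ∨ IsAltProd (offBase φ) i i (x⁻¹ * g * x)) := by
    intro i k x g hx hki hg
    rcases hg with hg | hg
    · have hx' : x ∈ (of (φ := φ) i).range := by
        obtain ⟨y, _, rfl⟩ := hx
        exact ⟨y, rfl⟩
      exact mem_range_base_or_isAltProd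
        (mul_mem (mul_mem (inv_mem hx') (range_base_le_range_of i hg)) hx')
    · exact .inr (((IsAltProd.single (inv_mem_offBase i x hx)).append hki.symm hg).append hki
        (.single hx))
  induction hw generalizing k g with
  | single hx => exact letter hx hki hg
  | cons hx hik _ ih => simpa [mul_assoc] using ih hik (letter hx hki hg)

theorem conj_mem_of_isAltProd {i j k : Bool} {w g : PushoutI φ}
    (hw : IsAltProd (offBase φ) i j w) (hg : g ∈ (of (φ := φ) k).range) :
    w⁻¹ * g * w ∈ (base φ).range ∨ IsAltProd (offBase φ) j j (w⁻¹ * g * w) := by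
  by_cases hki : k = i
  swap
  · exact conj_mem_of_isAltProd_of_ne hw hki (mem_range_base_or_isAltProd hg)
  subst hki
  have letter : ∀ {x}, x ∈ offBase φ k → x⁻¹ * g * x ∈ (of (φ := φ) k).range := by
    rintro _ ⟨y, _, rfl⟩
    exact mul_mem (mul_mem (inv_mem ⟨y, rfl⟩) hg) ⟨y, rfl⟩
  cases hw with
  | single hx => exact mem_range_base_or_isAltProd (letter hx)
  | cons hx hik hy =>
    simpa [mul_assoc] using
      conj_mem_of_isAltProd_of_ne hy hik (mem_range_base_or_isAltProd (letter hx))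

/-- An element of a factor which commutes with a cyclically reduced product of positive length
lies in the base group. -/
theorem mem_range_base_of_commute (hφ : ∀ i, Function.Injective (φ i)) {i j k : Bool}
    (hij : i ≠ j) {w g : PushoutI φ} (hw : IsAltProd (offBase φ) i j w)
    (hg : g ∈ (of (φ := φ) k).range) (hwg : Commute w g) : g ∈ (base φ).range := by
  have hend : ∀ {a b : Bool} {v : PushoutI φ}, k ≠ b → IsAltProd (offBase φ) a b v →
      Commute v g → g ∈ (base φ).range := by
    intro a b v hkb hv hvg
    have hconj := conj_mem_of_isAltProd hv hg
    rw [mul_assoc, ← hvg.eq, inv_mul_cancel_left] at hconj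
    rcases hconj with h | h
    · exact h
    rcases mem_range_base_or_isAltProd hg with h' | h'
    · exact h'
    · have := notMem_range_base_of_isAltProd hφ (h'.append hkb (h.inv inv_mem_offBase))
      simp at this
  by_cases hkj : k = j
  · exact hend (hkj ▸ hij.symm) (hw.inv inv_mem_offBase) hwg.inv_left
  · exact hend hkj hw hwg

end Monoid.PushoutI

section Amalgam

variable {S B C : Type*} [Group S] [Group B] [Group C] (π : S →* Coprod B C)

/-- The subgroup generated by a finite subset of the kernel of `π`. -/
def finiteSpan (F : Finset π.ker) : Subgroup S :=
  Subgroup.closure (Subtype.val '' (F : Set π.ker))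

theorem finiteSpan_le_ker (F : Finset π.ker) : finiteSpan π F ≤ π.ker := by
  rw [finiteSpan, Subgroup.closure_le]
  rintro _ ⟨x, _, rfl⟩
  exact x.2

/-- The inclusion of `finiteSpan π F` into the preimages of the free factors. -/
def spanInclusion (F : Finset π.ker) (b : Bool) : finiteSpan π F →* factorPreimage π b :=
  Subgroup.inclusion ((finiteSpan_le_ker π F).trans (ker_le_factorPreimage π b))

theorem spanInclusion_injective (F : Finset π.ker) (b : Bool) :
    Function.Injective (spanInclusion π F b) :=
  Subgroup.inclusion_injective _

/-- The amalgam of the preimages of the free factors along `finiteSpan π F`. -/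
abbrev PartialAmalgam (F : Finset π.ker) : Type _ := PushoutI (spanInclusion π F)

/-- The natural map from the free product of the preimages of the free factors. -/
def toSource : CoprodI (fun b => factorPreimage π b) →* S :=
  CoprodI.lift fun b => (factorPreimage π b).subtype

/-- The natural map from a partial amalgam. -/
def PartialAmalgam.toSource (F : Finset π.ker) : PartialAmalgam π F →* S :=
  PushoutI.lift (fun b => (factorPreimage π b).subtype) (finiteSpan π F).subtype fun _ => rfl

theorem PartialAmalgam.toSource_of (F : Finset π.ker) {b : Bool} (x : factorPreimage π b) :
    PartialAmalgam.toSource π F (PushoutI.of b x) = x :=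
  PushoutI.lift_of ..

theorem PartialAmalgam.toSource_ofCoprodI (F : Finset π.ker)
    (x : CoprodI (fun b => factorPreimage π b)) :
    PartialAmalgam.toSource π F (PushoutI.ofCoprodI x) = _root_.toSource π x := by
  induction x using CoprodI.induction_on with
  | one => simp
  | of i m =>
    rw [PushoutI.ofCoprodI_of, PartialAmalgam.toSource_of]
    simp [_root_.toSource]
  | mul x y hx hy => simp only [map_mul, hx, hy]

theorem toSource_surjective (hπ : Function.Surjective π) : Function.Surjective (toSource π) := by
  rw [← MonoidHom.range_eq_top, eq_top_iff, ← iSup_factorPreimage π hπ, iSup_le_iff]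
  exact fun b x hx => ⟨CoprodI.of (⟨x, hx⟩ : factorPreimage π b), by simp [toSource]⟩

theorem of_eq_of_of_mem_finiteSpan {F : Finset π.ker} {x : S} (hx : x ∈ finiteSpan π F)
    {b c : Bool} (hb : x ∈ factorPreimage π b) (hc : x ∈ factorPreimage π c) :
    (PushoutI.of b ⟨x, hb⟩ : PartialAmalgam π F) = PushoutI.of c ⟨x, hc⟩ :=
  (PushoutI.of_apply_eq_base (spanInclusion π F) b ⟨x, hx⟩).trans
    (PushoutI.of_apply_eq_base (spanInclusion π F) c ⟨x, hx⟩).symm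

theorem eventually_of_eq_of {x : S} (hx : x ∈ π.ker) {b c : Bool}
    (hb : x ∈ factorPreimage π b) (hc : x ∈ factorPreimage π c) :
    ∀ᶠ F : Finset π.ker in atTop,
      (PushoutI.of b ⟨x, hb⟩ : PartialAmalgam π F) = PushoutI.of c ⟨x, hc⟩ := by
  filter_upwards [eventually_ge_atTop {⟨x, hx⟩}] with F hF
  refine of_eq_of_of_mem_finiteSpan π (Subgroup.subset_closure ⟨⟨x, hx⟩, ?_, rfl⟩) hb hc
  exact hF (Finset.mem_singleton_self _)

/-- The elements which, in all sufficiently large partial amalgams, come from a fixed element of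
the kernel of `π`. -/
def eventualKernel : Subgroup (CoprodI (fun b => factorPreimage π b)) where
  carrier := {x | ∃ l : π.ker, ∀ b, ∀ᶠ F : Finset π.ker in atTop,
    (PushoutI.ofCoprodI x : PartialAmalgam π F) =
      PushoutI.of b ⟨l, ker_le_factorPreimage π b l.2⟩}
  one_mem' := ⟨1, fun b => .of_forall fun F => by
    rw [map_one]; exact (map_one (PushoutI.of (φ := spanInclusion π F) b)).symm⟩
  mul_mem' := by
    rintro x y ⟨l, hl⟩ ⟨m, hm⟩
    refine ⟨l * m, fun b => ?_⟩
    filter_upwards [hl b, hm b] with F h₁ h₂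
    rw [map_mul, h₁, h₂, ← map_mul]
    rfl
  inv_mem' := by
    rintro x ⟨l, hl⟩
    refine ⟨l⁻¹, fun b => ?_⟩
    filter_upwards [hl b] with F h₁
    rw [map_inv, h₁, ← map_inv]
    rfl

theorem conj_of_mem_eventualKernel {b : Bool} (h : factorPreimage π b)
    {x : CoprodI (fun b => factorPreimage π b)} (hx : x ∈ eventualKernel π) :
    CoprodI.of (M := fun b => factorPreimage π b) h * x *
      (CoprodI.of (M := fun b => factorPreimage π b) h)⁻¹ ∈ eventualKernel π := by
  obtain ⟨l, hl⟩ := hx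
  have hmem : (h : S) * l * (h : S)⁻¹ ∈ π.ker := (MonoidHom.normal_ker π).conj_mem _ l.2 _
  refine ⟨⟨_, hmem⟩, fun c => ?_⟩
  filter_upwards [hl b, eventually_of_eq_of π hmem (ker_le_factorPreimage π b hmem)
    (ker_le_factorPreimage π c hmem)] with F h₁ h₂
  rw [map_mul, map_mul, map_inv, PushoutI.ofCoprodI_of, h₁, ← map_inv, ← map_mul, ← map_mul]
  exact h₂

/-- The partial amalgams converge to the source of `π`. -/
theorem eventually_ofCoprodI_eq_one (hπ : Function.Surjective π)
    {x : CoprodI (fun b => factorPreimage π b)} (hx : toSource π x = 1) :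
    ∀ᶠ F : Finset π.ker in atTop, (PushoutI.ofCoprodI x : PartialAmalgam π F) = 1 := by
  have hle : (π.comp (toSource π)).ker ≤ eventualKernel π := by
    refine ker_le_of_inf_ker_le (π.comp (toSource π)) (hπ.comp (toSource_surjective π hπ))
      (P := fun b => (CoprodI.of (M := fun b => factorPreimage π b) (i := b)).range) ?_ ?_ ?_ ?_
    · rw [eq_top_iff]
      intro y _
      induction y using CoprodI.induction_on with
      | one => exact one_mem _
      | of i m => exact Subgroup.mem_iSup_of_mem i ⟨m, rfl⟩
      | mul x y hx hy => exact mul_mem (hx trivial) (hy trivial)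
    · rintro b _ ⟨h, rfl⟩
      have hh : toSource π (CoprodI.of h) = h := by simp [toSource]
      rw [factorPreimage, Subgroup.mem_comap, MonoidHom.comp_apply, hh]
      exact h.2
    · rintro b _ ⟨h, rfl⟩ z hz
      exact conj_of_mem_eventualKernel π h hz
    · rintro b _ ⟨⟨h, rfl⟩, hh⟩
      have hh' : (h : S) ∈ π.ker := by
        simpa [MonoidHom.mem_ker, toSource] using hh
      refine ⟨⟨h, hh'⟩, fun c => ?_⟩
      filter_upwards [eventually_of_eq_of π hh' h.2 (ker_le_factorPreimage π c hh')] with F hF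
      rw [PushoutI.ofCoprodI_of]
      exact hF
  obtain ⟨l, hl⟩ := hle (show x ∈ _ by simp [MonoidHom.mem_ker, hx])
  obtain ⟨F, hF⟩ := (hl true).exists
  have hl1 : (l : S) = 1 := by
    have := congrArg (PartialAmalgam.toSource π F) hF
    rw [PartialAmalgam.toSource_ofCoprodI, hx, PartialAmalgam.toSource_of] at this
    exact this.symm
  filter_upwards [hl true] with F hF
  rw [hF, ← map_one (PushoutI.of (φ := spanInclusion π F) true)]
  exact congrArg _ (Subtype.ext hl1)

variable {π}

/-- The elements of the preimage of a free factor on which `σ` is the inclusion. -/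
def agreeSubgroup {F : Finset π.ker} (σ : S →* PartialAmalgam π F) (b : Bool) : Subgroup S :=
  ((σ.comp (factorPreimage π b).subtype).eqLocus
    (PushoutI.of (φ := spanInclusion π F) b)).map (factorPreimage π b).subtype

theorem mem_agreeSubgroup {F : Finset π.ker} {σ : S →* PartialAmalgam π F} {b : Bool} {x : S} :
    x ∈ agreeSubgroup σ b ↔ ∃ hx : x ∈ factorPreimage π b, σ x = PushoutI.of b ⟨x, hx⟩ := by
  constructor
  · rintro ⟨y, hy, rfl⟩
    exact ⟨y.2, hy⟩
  · rintro ⟨hx, h⟩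
    exact ⟨⟨x, hx⟩, h, rfl⟩

/-- If `σ` agrees with the inclusions on generating subgroups containing the letters of an
element `t` centralizing the kernel of `π`, then the kernel is contained in `finiteSpan π F`. -/
theorem ker_le_finiteSpan (hπ : Function.Surjective π) {F : Finset π.ker}
    (σ : S →* PartialAmalgam π F) (hσ : ⨆ b, agreeSubgroup σ b = ⊤) {i j : Bool} (hij : i ≠ j)
    {t : S} (ht : IsAltProd (fun b => (agreeSubgroup σ b : Set S) \ π.ker) i j t)
    (htc : ∀ l ∈ π.ker, Commute t l) : π.ker ≤ finiteSpan π F := by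
  have hinj := spanInclusion_injective π F
  have hσt : IsAltProd (PushoutI.offBase (spanInclusion π F)) i j (σ t) := by
    refine ht.map σ fun b x hx => ?_
    obtain ⟨hxb, hx'⟩ := mem_agreeSubgroup.1 hx.1
    refine ⟨⟨x, hxb⟩, ?_, hx'.symm⟩
    rintro ⟨y, hy⟩
    obtain rfl : (y : S) = x := congrArg Subtype.val hy
    exact hx.2 (finiteSpan_le_ker π F y.2)
  have hspan : ∀ b, agreeSubgroup σ b ⊓ π.ker ≤ finiteSpan π F := by
    rintro b l ⟨hl, hlk⟩
    obtain ⟨hlb, hl'⟩ := mem_agreeSubgroup.1 hl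
    obtain ⟨y, hy⟩ := PushoutI.mem_range_base_of_commute hinj hij hσt
      (g := σ l) (k := b) ⟨_, hl'.symm⟩ ((htc l hlk).map σ)
    rw [hl', ← PushoutI.of_apply_eq_base _ b] at hy
    obtain rfl : (y : S) = l := congrArg Subtype.val (PushoutI.of_injective hinj b hy)
    exact y.2
  have hle : ∀ b c, agreeSubgroup σ b ⊓ π.ker ≤ agreeSubgroup σ c ⊓ π.ker := by
    rintro b c l hl
    obtain ⟨hlb, hl'⟩ := mem_agreeSubgroup.1 hl.1
    have hlc := ker_le_factorPreimage π c hl.2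
    exact ⟨mem_agreeSubgroup.2 ⟨hlc,
      hl'.trans (of_eq_of_of_mem_finiteSpan π (hspan b hl) hlb hlc)⟩, hl.2⟩
  refine le_trans (ker_le_of_inf_ker_le π hπ hσ
    (fun b x hx => (mem_agreeSubgroup.1 hx).1) (Z := agreeSubgroup σ true ⊓ π.ker) ?_ ?_)
    (hspan true)
  · intro b p hp z hz
    have hz' := hle true b hz
    exact hle b true ⟨Subgroup.mul_mem _ (Subgroup.mul_mem _ hp hz'.1) (Subgroup.inv_mem _ hp),
      (MonoidHom.normal_ker π).conj_mem _ hz'.2 _⟩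
  · exact fun b => hle b true

/-- For a finitely presented source, the kernel of a map onto a free product is finitely generated
as soon as it is centralized by a cyclically reduced element of positive length. -/
theorem ker_fg_of_isAltProd (hπ : Function.Surjective π) (hS : FinitelyPresentedGroup S)
    {i j : Bool} (hij : i ≠ j) {t : S}
    (ht : IsAltProd (fun b => (factorPreimage π b : Set S) \ π.ker) i j t)
    (htc : ∀ l ∈ π.ker, Commute t l) : π.ker.FG := by
  obtain ⟨n, rels, f, hf, hker⟩ := hS
  obtain ⟨lift, hlift⟩ := (toSource_surjective π hπ).hasRightInverse
  set f' : FreeGroup (Fin n) →* CoprodI (fun b => factorPreimage π b) :=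
    FreeGroup.lift fun k => lift (f (FreeGroup.of k)) with hf'
  have hcomp : ∀ y, toSource π (f' y) = f y := by
    have : (toSource π).comp f' = f := by
      ext k
      simp [hf', hlift _]
    exact fun y => DFunLike.congr_fun this y
  obtain ⟨word, hword⟩ := hf.hasRightInverse
  have hrels : ∀ᶠ F : Finset π.ker in atTop, ∀ r ∈ rels,
      (PushoutI.ofCoprodI (f' r) : PartialAmalgam π F) = 1 := by
    rw [Filter.eventually_all_finset]
    intro r hr
    refine eventually_ofCoprodI_eq_one π hπ ?_
    rw [hcomp, ← MonoidHom.mem_ker, hker]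
    exact Subgroup.subset_normalClosure hr
  let agree (F : Finset π.ker) (b : Bool) : Set S := {x | ∃ hx : x ∈ factorPreimage π b,
    (PushoutI.ofCoprodI (f' (word x)) : PartialAmalgam π F) = PushoutI.of b ⟨x, hx⟩}
  have hagree : ∀ b, ∀ x ∈ factorPreimage π b, ∀ᶠ F in atTop, x ∈ agree F b := by
    intro b x hx
    have hone : toSource π (f' (word x) *
        (CoprodI.of (M := fun b => factorPreimage π b) (i := b) ⟨x, hx⟩)⁻¹) = 1 := by
      rw [map_mul, hcomp, hword]
      simp [toSource]
    filter_upwards [eventually_ofCoprodI_eq_one π hπ hone] with F hF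
    refine ⟨hx, ?_⟩
    rwa [map_mul, map_inv, PushoutI.ofCoprodI_of, mul_inv_eq_one] at hF
  have hgen : ∀ x : S, ∀ᶠ F in atTop, x ∈ Subgroup.closure (⋃ b, agree F b) := by
    intro x
    have hx : x ∈ ⨆ b, factorPreimage π b := by simp [iSup_factorPreimage π hπ]
    induction hx using Subgroup.iSup_induction' with
    | hp b x hx =>
      filter_upwards [hagree b x hx] with F hF
      exact Subgroup.subset_closure (Set.mem_iUnion_of_mem b hF)
    | h1 => exact .of_forall fun F => one_mem _
    | hmul x y _ _ hx hy => filter_upwards [hx, hy] with F h₁ h₂ using mul_mem h₁ h₂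
  have hgens : ∀ᶠ F in atTop, ∀ k : Fin n,
      f (FreeGroup.of k) ∈ Subgroup.closure (⋃ b, agree F b) :=
    Filter.eventually_all.2 fun k => hgen _
  have hletters : ∀ᶠ F in atTop, IsAltProd (fun b => agree F b \ π.ker) i j t :=
    ht.eventually fun b x hx => by
      filter_upwards [hagree b x hx.1] with F hF using ⟨hF, hx.2⟩
  obtain ⟨F, hF, hFgen, hFt⟩ := (hrels.and (hgens.and hletters)).exists
  let θ : FreeGroup (Fin n) →* PartialAmalgam π F := PushoutI.ofCoprodI.comp f'
  have hθ : f.ker ≤ θ.ker := by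
    rw [hker]
    exact Subgroup.normalClosure_le_normal fun r hr => hF r hr
  let σ : S →* PartialAmalgam π F := f.liftOfRightInverse word hword ⟨θ, hθ⟩
  have hσ : ∀ x, σ x = θ (word x) := fun x => by
    have := f.liftOfRightInverse_comp_apply word hword ⟨θ, hθ⟩ (word x)
    rwa [hword] at this
  have hsub : ∀ b, agree F b ⊆ agreeSubgroup σ b := by
    rintro b x ⟨hx, hx'⟩
    exact mem_agreeSubgroup.2 ⟨hx, (hσ x).trans hx'⟩
  have htop : ⨆ b, agreeSubgroup σ b = ⊤ := by
    have hle : Subgroup.closure (⋃ b, agree F b) ≤ ⨆ b, agreeSubgroup σ b := by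
      rw [Subgroup.closure_le]
      exact Set.iUnion_subset fun b => (hsub b).trans (le_iSup (agreeSubgroup σ) b)
    rw [eq_top_iff, ← MonoidHom.range_eq_top.2 hf, MonoidHom.range_eq_map,
      ← FreeGroup.closure_range_of, MonoidHom.map_closure, Subgroup.closure_le]
    rintro _ ⟨_, ⟨k, rfl⟩, rfl⟩
    exact hle (hFgen k)
  have hFt' := hFt.map (U' := fun b => (agreeSubgroup σ b : Set S) \ π.ker) (MonoidHom.id S)
    fun b x hx => ⟨hsub b hx.1, hx.2⟩
  have heq : π.ker = finiteSpan π F :=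
    le_antisymm (ker_le_finiteSpan hπ σ htop hij hFt' htc) (finiteSpan_le_ker π F)
  rw [heq, Subgroup.fg_iff]
  exact ⟨_, rfl, F.finite_toSet.image _⟩

/-- For a finitely presented source, the kernel of a map onto a free product of nontrivial groups
is finitely generated as soon as an element outside the kernel centralizes it. -/
theorem ker_fg_of_commute [Nontrivial B] [Nontrivial C] (hπ : Function.Surjective π)
    (hS : FinitelyPresentedGroup S) {t : S} (ht : t ∉ π.ker)
    (htc : ∀ l ∈ π.ker, Commute t l) : π.ker.FG := by
  obtain ⟨i, j, hij⟩ :=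
    IsAltProd.exists_of_notMem (ker_le_factorPreimage π) (iSup_factorPreimage π hπ) ht
  by_cases h : i = j
  swap
  · exact ker_fg_of_isAltProd hπ hS h hij htc
  subst h
  obtain ⟨c, hc⟩ : ∃ c, c ∈ (factorPreimage π (!i) : Set S) \ π.ker := by
    cases i
    · obtain ⟨b, hb⟩ := exists_ne (1 : B)
      obtain ⟨c, hc⟩ := hπ (Coprod.inl b)
      refine ⟨c, ⟨b, hc.symm⟩, fun h => hb (Coprod.inl_injective (N := C) ?_)⟩
      rw [← hc, map_one]
      exact h
    · obtain ⟨b, hb⟩ := exists_ne (1 : C)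
      obtain ⟨c, hc⟩ := hπ (Coprod.inr b)
      refine ⟨c, ⟨b, hc.symm⟩, fun h => hb (Coprod.inr_injective (M := B) ?_)⟩
      rw [← hc, map_one]
      exact h
  have hne : i ≠ !i := by simp
  have hc' : c⁻¹ ∈ (factorPreimage π (!i) : Set S) \ π.ker :=
    ⟨inv_mem hc.1, fun h => hc.2 (by simpa using h)⟩
  refine ker_fg_of_isAltProd hπ hS hne
    (hij.append hne (.cons hc hne.symm (hij.append hne (.single hc')))) fun l hl => ?_
  have hconj := htc _ ((MonoidHom.normal_ker π).conj_mem l hl c⁻¹)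
  refine (htc l hl).mul_left ?_
  have := hconj.map (MulAut.conj c).toMonoidHom
  simpa [mul_assoc] using this

end Amalgam

theorem leftFiber_fg_of_subdirect
    {A K : Type} [Group A] [Group K]
    (hfgK : Group.FG K) (hrfK : ResiduallyFinite K) (hfpK : HasFreeProductDecomp K)
    (S : Subgroup (A × K)) (hsub : IsSubdirect S) (hS : FinitelyPresentedGroup S)
    (hK : S.comap (MonoidHom.inr A K) ≠ ⊥) :
    (S.comap (MonoidHom.inl A K)).FG := by
  obtain ⟨B, C, _, _, _, _, ⟨e⟩⟩ := hfpK
  set π : S →* Coprod B C := (e : K →* Coprod B C).comp ((MonoidHom.snd A K).comp S.subtype)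
  have hker : ∀ s : S, s ∈ π.ker ↔ (s : A × K).2 = 1 := fun s => by
    simp [π, MonoidHom.mem_ker]
  have hπ : Function.Surjective π := by
    refine e.surjective.comp fun k => ?_
    obtain ⟨s, hs, rfl⟩ : k ∈ S.map (MonoidHom.snd A K) := hsub.2 ▸ Subgroup.mem_top k
    exact ⟨⟨s, hs⟩, rfl⟩
  obtain ⟨n, hn, hn1⟩ := (S.comap (MonoidHom.inr A K)).bot_or_exists_ne_one.resolve_left hK
  have hfg : π.ker.FG := by
    refine ker_fg_of_commute hπ hS (t := ⟨(1, n), hn⟩) (fun h => hn1 ((hker _).1 h))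
      fun l hl => ?_
    have hl' := (hker l).1 hl
    ext <;> simp [hl']
  obtain ⟨T, hT, hTfin⟩ := (Subgroup.fg_iff _).1 hfg
  refine (Subgroup.fg_iff _).2 ⟨(MonoidHom.fst A K).comp S.subtype '' T, ?_, hTfin.image _⟩
  rw [← MonoidHom.map_closure, hT, eq_comm]
  ext a
  constructor
  · exact fun ha => ⟨⟨(a, 1), ha⟩, (hker _).2 rfl, rfl⟩
  · rintro ⟨⟨⟨a, k⟩, hs⟩, hk, rfl⟩
    obtain rfl : k = 1 := (hker _).1 hk
    exact hs
end

section
/- Let P₄¹ = ⟨a, b, c, d⟩ and P₄² = ⟨a′, b′, c′, d′⟩ be two copies of the right-angled Artin group P₄, and let f : P₄¹ × P₄² → ℤ be the homomorphism defined by f(a) = f(b) = f(d) = 1, f(c) = 0, and f(a′) = f(b′) = f(c′) = f(d′) = 1. Let S be the kernel of f. Then for every n ≥ 0 the homology group H_n(S; ℤ) (group homology with trivial integer coefficients) is a finitely generated abelian group. -/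
section BarHomology

variable (G : Type) [Group G]

/-- The `n`-th inhomogeneous chain group of `G` with `ℤ` coefficients: the free abelian
group on `n`-tuples of elements of `G`. -/
abbrev barChain (n : ℕ) : Type := (Fin n → G) →₀ ℤ

/-- The `i`-th face of an `(n+1)`-tuple: for `i = 0` drop the first entry, for
`1 ≤ i ≤ n` multiply the `i`-th and `(i+1)`-st entries, and for `i = n + 1` drop the
last entry. -/
def barFace {n : ℕ} (i : Fin (n + 2)) (g : Fin (n + 1) → G) : Fin n → G :=
  fun j =>
    if (j : ℕ) + 1 < (i : ℕ) then g j.castSucc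
    else if (j : ℕ) + 1 = (i : ℕ) then g j.castSucc * g j.succ
    else g j.succ

/-- The standard differential of the inhomogeneous chain complex computing the group
homology `H_*(G; ℤ)`:
`d(g₁,…,g_{n+1}) = (g₂,…,g_{n+1}) + ∑_{i=1}^{n} (-1)^i (g₁,…,gᵢg_{i+1},…,g_{n+1})
  + (-1)^{n+1} (g₁,…,gₙ)`. -/
noncomputable def barD (n : ℕ) : barChain G (n + 1) →ₗ[ℤ] barChain G n :=
  Finsupp.lift (barChain G n) ℤ (Fin (n + 1) → G)
    (fun g => ∑ i : Fin (n + 2),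
      ((-1 : ℤ) ^ (i : ℕ)) • Finsupp.single (barFace G i g) (1 : ℤ))

/-- The `n`-cycles: all of `C₀` in degree `0`, and the kernel of the outgoing
differential in positive degrees. -/
noncomputable def barCycles : (n : ℕ) → Submodule ℤ (barChain G n)
  | 0 => ⊤
  | (k + 1) => LinearMap.ker (barD G k)

/-- The `n`-th group homology `H_n(G; ℤ)` of `G` with trivial integer coefficients:
`n`-cycles modulo `n`-boundaries in the inhomogeneous chain complex. -/
def groupHomologyZ (n : ℕ) : Type :=
  barCycles G n ⧸ Submodule.comap (barCycles G n).subtype (LinearMap.range (barD G n))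

noncomputable instance (n : ℕ) : AddCommGroup (groupHomologyZ G n) := by
  unfold groupHomologyZ; infer_instance

end BarHomology

/-- The commutation relator `[g_i, g_j]` in the free group on four generators. -/
def commRel (i j : Fin 4) : FreeGroup (Fin 4) :=
  FreeGroup.of i * FreeGroup.of j * (FreeGroup.of i)⁻¹ * (FreeGroup.of j)⁻¹

/-- The defining relators of the right-angled Artin group
`P₄ = ⟨a, b, c, d ∣ ab = ba, bc = cb, cd = dc⟩` (with `a, b, c, d` indexed by `0, 1, 2, 3`). -/
def p4Rels : Set (FreeGroup (Fin 4)) := {commRel 0 1, commRel 1 2, commRel 2 3}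

/-- The right-angled Artin group on the path with four vertices. -/
abbrev P4 : Type := PresentedGroup p4Rels

section Comparison

open CategoryTheory

variable {G : Type} [Group G]

lemma barFace_zero {n : ℕ} (g : Fin (n + 1) → G) : barFace G 0 g = fun j => g j.succ := by
  funext j
  simp [barFace]

lemma barFace_succ {n : ℕ} (i : Fin (n + 1)) (g : Fin (n + 1) → G) :
    barFace G i.succ g = Fin.contractNth i (· * ·) g := by
  funext j
  simp [barFace, Fin.contractNth]

/-- The differential of the integral bar complex is that of the inhomogeneous chains with
trivial coefficients. -/
lemma barD_eq_inhomogeneousChains_d (n : ℕ) :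
    barD G n = (groupHomology.inhomogeneousChains.d (Rep.trivial ℤ G ℤ) n).hom := by
  refine Finsupp.lhom_ext fun g z => ?_
  have h := groupHomology.inhomogeneousChains.d_single (A := Rep.trivial ℤ G ℤ) n g z
  refine Eq.trans ?_ h.symm
  rw [barD, Finsupp.lift_apply, Finsupp.sum_single_index (by simp), Fin.sum_univ_succ,
    smul_add, Finset.smul_sum, barFace_zero]
  congr 1
  · simp
  · refine Finset.sum_congr rfl fun j _ => ?_
    rw [barFace_succ, smul_comm, Finsupp.smul_single_one, Fin.val_succ]

lemma fg_groupHomologyZ (n : ℕ) (h : Module.Finite ℤ (groupHomology (Rep.trivial ℤ G ℤ) n)) :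
    AddGroup.FG (groupHomologyZ G n) := by
  let K := groupHomology.inhomogeneousChains (Rep.trivial ℤ G ℤ)
  let i : ModuleCat.of ℤ (barCycles G n) ⟶ K.X n := ModuleCat.ofHom (barCycles G n).subtype
  have hi : i ≫ K.d n ((ComplexShape.down ℕ).next n) = 0 := by
    cases n with
    | zero => rw [K.shape _ _ (by simp)]; simp
    | succ m =>
      rw [ChainComplex.next_nat_succ, groupHomology.inhomogeneousChains.d_def]
      refine ModuleCat.hom_ext (LinearMap.ext fun x => ?_)
      have := x.2
      simp only [barCycles, LinearMap.mem_ker, barD_eq_inhomogeneousChains_d] at this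
      exact this
  let p := K.liftCycles i _ rfl hi ≫ K.homologyπ n
  have hex : (ShortComplex.mk (K.toCycles (n + 1) n) (K.homologyπ n) (by simp)).Exact :=
    ShortComplex.exact_of_g_is_cokernel _ (K.homologyIsCokernel (n + 1) n (by simp))
  have hker : LinearMap.ker p.hom ≤
      Submodule.comap (barCycles G n).subtype (LinearMap.range (barD G n)) := by
    intro x hx
    obtain ⟨y, hy⟩ := (ShortComplex.moduleCat_exact_iff _).1 hex (K.liftCycles i _ rfl hi x) hx
    refine ⟨y, ?_⟩
    rw [barD_eq_inhomogeneousChains_d, ← groupHomology.inhomogeneousChains.d_def]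
    have h1 := congrArg (K.iCycles n) hy
    have h2 : K.iCycles n (K.toCycles (n + 1) n y) = K.d (n + 1) n y := by
      rw [← ConcreteCategory.comp_apply, K.toCycles_i]
    have h3 : K.iCycles n (K.liftCycles i _ rfl hi x) = i x := by
      rw [← ConcreteCategory.comp_apply, K.liftCycles_i]
    exact h2.symm.trans (h1.trans h3)
  have hfin : Module.Finite ℤ (K.homology n) := h
  have : Module.Finite ℤ (barCycles G n ⧸ LinearMap.ker p.hom) :=
    Module.Finite.of_injective ((LinearMap.ker p.hom).liftQ p.hom le_rfl)
      (LinearMap.ker_eq_bot.1 (Submodule.ker_liftQ_eq_bot _ _ _ le_rfl))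
  have : Module.Finite ℤ (barCycles G n ⧸
      Submodule.comap (barCycles G n).subtype (LinearMap.range (barD G n))) :=
    Module.Finite.of_surjective (Submodule.factor hker) (Submodule.factor_surjective hker)
  exact (Module.Finite.iff_addGroup_fg).1 this

end Comparison

section FiniteHomology

open CategoryTheory

variable {k S : Type} [CommRing k] [Group S]

/-- A representation has finite homology if all its homology groups are finitely generated
modules. -/
def HasFiniteHomology (A : Rep.{0} k S) : Prop :=
  ∀ n, Module.Finite k (groupHomology A n)

lemma HasFiniteHomology.of_retract {A B : Rep.{0} k S} (i : A ⟶ B) (p : B ⟶ A) (h : i ≫ p = 𝟙 A)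
    (hB : HasFiniteHomology B) : HasFiniteHomology A := by
  intro n
  have := hB n
  let F := groupHomology.functor k S n
  have hF : F.map i ≫ F.map p = 𝟙 _ := by rw [← F.map_comp, h, F.map_id]
  let q : groupHomology B n ⟶ groupHomology A n := F.map p
  exact Module.Finite.of_surjective q.hom fun x => ⟨F.map i x, congrArg (fun φ => φ x) hF⟩

lemma HasFiniteHomology.of_shortExact [IsNoetherianRing k] {X : ShortComplex (Rep.{0} k S)}
    (hX : X.ShortExact) (h₁ : HasFiniteHomology X.X₁) (h₂ : HasFiniteHomology X.X₂) :
    HasFiniteHomology X.X₃ := by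
  intro n
  have := h₂ n
  cases n with
  | zero =>
    have := hX.epi_g
    exact Module.Finite.of_surjective (M := groupHomology X.X₂ 0) _
      ((ModuleCat.epi_iff_surjective _).1
        (inferInstance : Epi (groupHomology.map (MonoidHom.id S) X.g 0)))
  | succ n =>
    have := h₁ n
    have hex := groupHomology.mapShortComplex₃_exact hX (i := n + 1) (j := n) rfl
    let f : groupHomology X.X₂ (n + 1) →ₗ[k] groupHomology X.X₃ (n + 1) :=
      (groupHomology.mapShortComplex₃ hX (i := n + 1) (j := n) rfl).f.hom
    let g : groupHomology X.X₃ (n + 1) →ₗ[k] groupHomology X.X₁ n :=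
      (groupHomology.mapShortComplex₃ hX (i := n + 1) (j := n) rfl).g.hom
    have hfg : LinearMap.range f = LinearMap.ker g := hex.moduleCat_range_eq_ker
    have : IsNoetherian k (groupHomology X.X₃ (n + 1)) :=
      isNoetherian_of_range_eq_ker f g hfg
    infer_instance

lemma HasFiniteHomology.of_exact [IsNoetherianRing k] {V₁ V₂ V₃ : Type} [AddCommGroup V₁]
    [AddCommGroup V₂] [AddCommGroup V₃] [Module k V₁] [Module k V₂] [Module k V₃]
    {ρ₁ : Representation k S V₁} {ρ₂ : Representation k S V₂} {ρ₃ : Representation k S V₃}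
    (α : ρ₁.IntertwiningMap ρ₂) (β : ρ₂.IntertwiningMap ρ₃)
    (hα : Function.Injective α) (hβ : Function.Surjective β)
    (hαβ : Function.Exact α β)
    (h₁ : HasFiniteHomology (Rep.of ρ₁)) (h₂ : HasFiniteHomology (Rep.of ρ₂)) :
    HasFiniteHomology (Rep.of ρ₃) := by
  have hz : Rep.ofHom α ≫ Rep.ofHom β = 0 := by
    ext x
    exact hαβ.apply_apply_eq_zero x
  let X : ShortComplex (Rep.{0} k S) := ShortComplex.mk (Rep.ofHom α) (Rep.ofHom β) hz
  have hex : (X.map (forget₂ (Rep.{0} k S) (ModuleCat k))).Exact :=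
    (ShortComplex.moduleCat_exact_iff _).2 fun x hx => (hαβ x).1 hx
  exact HasFiniteHomology.of_shortExact (X := X)
    { exact := (ShortComplex.exact_map_iff_of_faithful _ _).1 hex
      mono_f := (Rep.mono_iff_injective _).2 hα
      epi_g := (Rep.epi_iff_surjective _).2 hβ } h₁ h₂

end FiniteHomology

section Permutation

/-- The permutation representation on the free module on an `S`-set. -/
noncomputable def permRep (k S X : Type) [CommRing k] [Group S] [MulAction S X] :
    Representation k S (X →₀ k) where
  toFun g := Finsupp.lmapDomain k k (g • ·)
  map_one' := by ext; simp
  map_mul' g h := by ext; simp [mul_smul]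

variable {k S X : Type} [CommRing k] [Group S] [MulAction S X]

@[simp]
lemma permRep_single (g : S) (x : X) (z : k) :
    permRep k S X g (Finsupp.single x z) = Finsupp.single (g • x) z := by
  simp [permRep]

/-- An equivariant map from an `S`-set to a representation extends to the permutation
representation. -/
noncomputable def permRepLift {V : Type} [AddCommGroup V] [Module k V] {ρ : Representation k S V}
    (φ : X → V) (hφ : ∀ (g : S) x, φ (g • x) = ρ g (φ x)) :
    (permRep k S X).IntertwiningMap ρ where
  toLinearMap := Finsupp.lift V k X φ
  isIntertwining' g := by
    ext x
    simp [hφ]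

@[simp]
lemma permRepLift_single {V : Type} [AddCommGroup V] [Module k V] {ρ : Representation k S V}
    (φ : X → V) (hφ : ∀ (g : S) x, φ (g • x) = ρ g (φ x)) (x : X) (z : k) :
    permRepLift φ hφ (Finsupp.single x z) = z • φ x := by
  change Finsupp.lift V k X φ (Finsupp.single x z) = _
  simp

open CategoryTheory

lemma hasFiniteHomology_trivial [Subsingleton X] [Nonempty X]
    (h : HasFiniteHomology (Rep.of (permRep k S X))) : HasFiniteHomology (Rep.trivial k S k) := by
  obtain ⟨x⟩ := ‹Nonempty X›
  have hx (g : S) : g • x = x := Subsingleton.elim _ _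
  let p : (permRep k S X).IntertwiningMap (Representation.trivial k S k) :=
    permRepLift (fun _ => 1) (by simp)
  let i : (Representation.trivial k S k).IntertwiningMap (permRep k S X) :=
    { toLinearMap := Finsupp.lsingle x
      isIntertwining' g := by ext; simp [hx] }
  refine HasFiniteHomology.of_retract (Rep.ofHom i) (Rep.ofHom p) ?_ h
  ext
  change p (Finsupp.single x 1) = (1 : k)
  simp [p]

/-- The permutation representation on a free transitive `S`-set has finitely generated homology,
by Shapiro's lemma for the trivial subgroup. -/
lemma hasFiniteHomology_of_torsor (x : X) (htrans : ∀ y : X, ∃ g : S, g • x = y)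
    (hfree : ∀ g : S, g • x = x → g = 1) : HasFiniteHomology (Rep.of (permRep k S X)) := by
  classical
  let T : Rep.{0} k (⊥ : Subgroup S) := Rep.trivial k (⊥ : Subgroup S) k
  have hT : HasFiniteHomology T := by
    intro n
    cases n with
    | zero =>
      have : Module.Finite k T := inferInstanceAs (Module.Finite k k)
      exact Module.Finite.of_surjective (M := T) (groupHomology.H0π T).hom
        ((ModuleCat.epi_iff_surjective _).1 inferInstance)
    | succ n =>
      have := ModuleCat.subsingleton_of_isZero (isZero_groupHomology_succ_of_subsingleton T n)
      infer_instance
  have hind : HasFiniteHomology (Rep.ind (⊥ : Subgroup S).subtype T) := fun n =>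
    have := hT n
    Module.Finite.equiv (groupHomology.indIso (⊥ : Subgroup S) T n).symm.toLinearEquiv
  choose γ hγ using htrans
  have hγ' (g : S) (y : X) : γ (g • y) = g * γ y := by
    have : (g * γ y)⁻¹ * γ (g • y) = 1 := hfree _ (by
      rw [mul_smul, hγ, inv_smul_eq_iff, mul_smul, hγ])
    exact (inv_mul_eq_one.1 this).symm
  let i : Rep.of (permRep k S X) ⟶ Rep.ind (⊥ : Subgroup S).subtype T :=
    Rep.ofHom <| permRepLift
      (fun y => Representation.IndV.mk (⊥ : Subgroup S).subtype T.ρ (γ y)⁻¹ (1 : k))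
      (fun g y => by rw [hγ', Representation.ind_mk, mul_inv_rev])
  let q : T ⟶ Rep.res (⊥ : Subgroup S).subtype (Rep.of (permRep k S X)) :=
    Rep.ofHom
      { toLinearMap := Finsupp.lsingle x
        isIntertwining' g := by
          have : (g : S) = 1 := g.2
          ext
          simp [this] }
  let p : Rep.ind (⊥ : Subgroup S).subtype T ⟶ Rep.of (permRep k S X) :=
    (Rep.indResHomEquiv (⊥ : Subgroup S).subtype T (Rep.of (permRep k S X))).symm q
  refine HasFiniteHomology.of_retract i p ?_ hind
  have hi (y : X) : i.hom (Finsupp.single y 1) =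
      Representation.IndV.mk (⊥ : Subgroup S).subtype T.ρ (γ y)⁻¹ (1 : k) := by
    refine Eq.trans (permRepLift_single _ ?_ y 1) (one_smul _ _)
    exact fun g y => by rw [hγ', Representation.ind_mk, mul_inv_rev]
  have hp (h : S) : p.hom (Representation.IndV.mk (⊥ : Subgroup S).subtype T.ρ h (1 : k)) =
      permRep k S X h⁻¹ (Finsupp.single x 1) := by
    exact Eq.trans (b := permRep k S X h⁻¹ (q.hom (1 : k))) (by simp [p]) rfl
  refine Rep.hom_ext (Representation.IntertwiningMap.ext
    (Finsupp.lhom_ext' fun y => LinearMap.ext_ring ?_))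
  change p.hom (i.hom (Finsupp.single y 1)) = Finsupp.single y 1
  rw [hi, hp, inv_inv, permRep_single, hγ]

end Permutation

section ArtinGroup

/-- The group `G` is the right-angled Artin group of the graph `Γ`, with vertices embedded as
generators by `ι`. -/
structure IsArtinGroup {G V : Type} [Group G] (Γ : SimpleGraph V) (ι : V → G) : Prop where
  closure_range : Subgroup.closure (Set.range ι) = ⊤
  commute : ∀ u v, Γ.Adj u v → Commute (ι u) (ι v)
  exists_lift : ∀ (H : Type) [Group H] (φ : V → H),
    (∀ u v, Γ.Adj u v → Commute (φ u) (φ v)) → ∃ F : G →* H, ∀ v, F (ι v) = φ v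

variable {k G V : Type} [CommRing k] [Group G]

/-- The subgroup generated by a set of vertices. -/
def vertexSubgroup (ι : V → G) (W : Set V) : Subgroup G := Subgroup.closure (ι '' W)

lemma mem_vertexSubgroup (ι : V → G) {W : Set V} {u : V} (hu : u ∈ W) :
    ι u ∈ vertexSubgroup ι W :=
  Subgroup.subset_closure ⟨u, hu, rfl⟩

lemma vertexSubgroup_mono (ι : V → G) {W W' : Set V} (h : W ⊆ W') :
    vertexSubgroup ι W ≤ vertexSubgroup ι W' :=
  Subgroup.closure_mono (Set.image_mono h)

/-- The affine permutation `m ↦ ρ g m + c` of the space of a representation `ρ`. -/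
def affinePerm {M : Type} [AddCommGroup M] [Module k M] (ρ : Representation k G M) (g : G)
    (c : M) : Equiv.Perm M where
  toFun m := ρ g m + c
  invFun m := ρ g⁻¹ (m - c)
  left_inv m := by simp
  right_inv m := by simp

lemma affinePerm_commute {M : Type} [AddCommGroup M] [Module k M] (ρ : Representation k G M)
    {g h : G} {c d : M} (hgh : Commute g h) (hcd : ρ g d + c = ρ h c + d) :
    Commute (affinePerm ρ g c) (affinePerm ρ h d) := by
  ext m
  change ρ g (ρ h m + d) + c = ρ h (ρ g m + c) + d
  have : ρ g (ρ h m) = ρ h (ρ g m) := by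
    rw [← Module.End.mul_apply, ← Module.End.mul_apply, ← map_mul, ← map_mul, hgh.eq]
  rw [map_add, map_add, add_assoc, add_assoc, hcd, this]

/-- On the subgroup generated by `W` there is a derivation with values in any representation,
vanishing on the vertices of `W` other than `v` and taking at `v` any prescribed value that is
fixed by the neighbours of `v` in `W`. -/
lemma IsArtinGroup.exists_derivation {Γ : SimpleGraph V} {ι : V → G} (hG : IsArtinGroup Γ ι)
    {M : Type} [AddCommGroup M] [Module k M] (ρ : Representation k G M) {W : Set V} {v : V}
    (hv : v ∈ W) (m : M) (hm : ∀ u ∈ W, Γ.Adj u v → ρ (ι u) m = m) :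
    ∃ δ : G → M, (∀ g ∈ vertexSubgroup ι W, ∀ h, δ (g * h) = ρ g (δ h) + δ g) ∧
      δ (ι v) = m ∧ ∀ g ∈ vertexSubgroup ι (W \ {v}), δ g = 0 := by
  classical
  let c (u : V) : M := if u = v then m else 0
  obtain ⟨F, hF⟩ := hG.exists_lift (Equiv.Perm M)
    (fun u => if u ∈ W then affinePerm ρ (ι u) (c u) else 1) (by
      intro u w huw
      by_cases hu : u ∈ W
      · by_cases hw : w ∈ W
        · simp only [hu, hw, if_true]
          refine affinePerm_commute ρ (hG.commute u w huw) ?_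
          by_cases huv : u = v
          · subst huv
            simp [c, huw.ne', hm w hw huw.symm]
          · by_cases hwv : w = v
            · subst hwv
              simp [c, huv, hm u hu huw]
            · simp [c, huv, hwv]
        · simp [hw]
      · simp [hu])
  have hgen (u : V) (hu : u ∈ W) (x : M) : F (ι u) x = ρ (ι u) x + c u := by
    rw [hF, if_pos hu]
    rfl
  have haff : ∀ g ∈ vertexSubgroup ι W, ∀ x, F g x = ρ g x + F g 0 := by
    intro g hg
    induction hg using Subgroup.closure_induction with
    | mem g hg =>
      obtain ⟨u, hu, rfl⟩ := hg
      intro x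
      simp [hgen u hu]
    | one => simp
    | mul g h _ _ ihg ihh =>
      intro x
      rw [map_mul, Equiv.Perm.mul_apply, Equiv.Perm.mul_apply, ihg, ihh, ihg (F h 0), map_mul,
        Module.End.mul_apply, map_add]
      abel
    | inv g _ ih =>
      have key (x : M) : F g⁻¹ x = ρ g⁻¹ (x - F g 0) := by
        rw [map_inv, Equiv.Perm.inv_eq_iff_eq, ih]
        simp
      intro x
      rw [key, key 0, ← map_add]
      simp [sub_eq_add_neg]
  refine ⟨fun g => F g 0, fun g hg h => ?_, ?_, ?_⟩
  · simp only [map_mul, Equiv.Perm.mul_apply]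
    exact haff g hg _
  · simp [hgen v hv, c]
  · have hle : vertexSubgroup ι (W \ {v}) ≤
        (MulAction.stabilizer (Equiv.Perm M) (0 : M)).comap F := by
      rw [vertexSubgroup, Subgroup.closure_le]
      rintro _ ⟨u, ⟨hu, huv⟩, rfl⟩
      have huv : u ≠ v := huv
      simp [MulAction.mem_stabilizer_iff, hgen u hu, c, huv]
    exact fun g hg => hle hg

/-- For a vertex `v` of `W` there is an exact sequence
`0 → k[G / ⟨W ∩ lk v⟩] → k[G / ⟨W \ v⟩] → k[G / ⟨W⟩] → 0`, so finiteness of homology passes from the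
first two terms to the third. -/
lemma IsArtinGroup.hasFiniteHomology_of_vertex [IsNoetherianRing k] {Γ : SimpleGraph V} {ι : V → G}
    (hG : IsArtinGroup Γ ι) (S : Subgroup G) {W : Set V} {v : V} (hv : v ∈ W)
    (hlink : HasFiniteHomology
      (Rep.of (permRep k S (G ⧸ vertexSubgroup ι (W ∩ Γ.neighborSet v)))))
    (hdel : HasFiniteHomology (Rep.of (permRep k S (G ⧸ vertexSubgroup ι (W \ {v}))))) :
    HasFiniteHomology (Rep.of (permRep k S (G ⧸ vertexSubgroup ι W))) := by
  classical
  set E := vertexSubgroup ι (W ∩ Γ.neighborSet v) with hE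
  set B := vertexSubgroup ι (W \ {v})
  set C := vertexSubgroup ι W
  have hEB : E ≤ B := vertexSubgroup_mono ι fun u hu => ⟨hu.1, fun h => hu.2.ne' h⟩
  have hBC : B ≤ C := vertexSubgroup_mono ι Set.sdiff_subset
  have hvC : ι v ∈ C := mem_vertexSubgroup ι hv
  have hcomm : ∀ e ∈ E, e * ι v = ι v * e := by
    have : E ≤ Subgroup.centralizer {ι v} := by
      rw [hE, vertexSubgroup, Subgroup.closure_le]
      rintro _ ⟨u, hu, rfl⟩
      exact Subgroup.mem_centralizer_singleton_iff.2 (hG.commute v u hu.2).eq.symm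
    exact fun e he => Subgroup.mem_centralizer_singleton_iff.1 (this he)
  let τ : G ⧸ E → G ⧸ B := Quotient.map' (fun g => g * ι v) fun a b hab => by
    rw [QuotientGroup.leftRel_apply] at hab ⊢
    have : (a * ι v)⁻¹ * (b * ι v) = a⁻¹ * b := by
      rw [mul_inv_rev, mul_assoc, ← mul_assoc a⁻¹, hcomm _ hab, inv_mul_cancel_left]
    rw [this]
    exact hEB hab
  have hτ (g : G) : τ (g : G ⧸ E) = ((g * ι v : G) : G ⧸ B) := rfl
  let α : (G ⧸ E →₀ k) →ₗ[k] (G ⧸ B →₀ k) := Finsupp.lift _ k _ fun x =>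
    Finsupp.single (τ x) 1 - Finsupp.single (Subgroup.quotientMapOfLE hEB x) 1
  let β : (G ⧸ B →₀ k) →ₗ[k] (G ⧸ C →₀ k) := Finsupp.lift _ k _ fun x =>
    Finsupp.single (Subgroup.quotientMapOfLE hBC x) 1
  have hα (g : G) : α (Finsupp.single (g : G ⧸ E) 1) =
      Finsupp.single ((g * ι v : G) : G ⧸ B) 1 - Finsupp.single (g : G ⧸ B) 1 := by
    simp [α, hτ]
  have hβ (g : G) : β (Finsupp.single (g : G ⧸ B) 1) = Finsupp.single (g : G ⧸ C) 1 := by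
    simp [β]
  have hρ {K : Subgroup G} (g h : G) : permRep k G (G ⧸ K) g (Finsupp.single (h : G ⧸ K) 1) =
      Finsupp.single ((g * h : G) : G ⧸ K) 1 := by
    rw [permRep_single]
    rfl
  have hαρ (g : G) : α ∘ₗ permRep k G (G ⧸ E) g = permRep k G (G ⧸ B) g ∘ₗ α := by
    refine Finsupp.lhom_ext' fun x => LinearMap.ext_ring ?_
    induction x using QuotientGroup.induction_on with
    | H x =>
      change α (permRep k G _ g (Finsupp.single _ 1)) = permRep k G _ g (α (Finsupp.single _ 1))
      rw [hρ, hα, hα, map_sub, hρ, hρ, mul_assoc]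
  have hβρ (g : G) : β ∘ₗ permRep k G (G ⧸ B) g = permRep k G (G ⧸ C) g ∘ₗ β := by
    refine Finsupp.lhom_ext' fun x => LinearMap.ext_ring ?_
    induction x using QuotientGroup.induction_on with
    | H x =>
      change β (permRep k G _ g (Finsupp.single _ 1)) = permRep k G _ g (β (Finsupp.single _ 1))
      rw [hρ, hβ, hβ, hρ]
  have hαρ' (g : G) (m) : α (permRep k G (G ⧸ E) g m) = permRep k G (G ⧸ B) g (α m) :=
    LinearMap.congr_fun (hαρ g) m
  obtain ⟨δ, hδmul, hδv, hδB⟩ := hG.exists_derivation (permRep k G (G ⧸ E)) hv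
    (Finsupp.single ((1 : G) : G ⧸ E) 1) (fun u hu huv => by
      rw [hρ, mul_one]
      congr 1
      rw [QuotientGroup.eq, mul_one, inv_mem_iff]
      exact mem_vertexSubgroup ι ⟨hu, huv.symm⟩)
  have hδone : δ 1 = 0 := hδB 1 (one_mem _)
  have hαδ : ∀ g ∈ C, α (δ g) =
      Finsupp.single (g : G ⧸ B) 1 - Finsupp.single ((1 : G) : G ⧸ B) 1 := by
    intro g hg
    induction hg using Subgroup.closure_induction with
    | mem g hg =>
      obtain ⟨u, hu, rfl⟩ := hg
      by_cases huv : u = v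
      · rw [huv, hδv, hα, one_mul]
      · have huB : ι u ∈ B := mem_vertexSubgroup ι ⟨hu, huv⟩
        have : (ι u : G ⧸ B) = ((1 : G) : G ⧸ B) := by
          rwa [QuotientGroup.eq, mul_one, inv_mem_iff]
        rw [hδB _ huB, this, map_zero, sub_self]
    | one => rw [hδone, map_zero, sub_self]
    | mul g h hg _ ihg ihh =>
      rw [hδmul g hg, map_add, hαρ', ihg, ihh, map_sub, hρ, hρ, mul_one]
      abel
    | inv g hg ih =>
      have h0 : permRep k G _ g (α (δ g⁻¹)) + α (δ g) = 0 := by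
        rw [← hαρ', ← map_add, ← hδmul g hg, mul_inv_cancel, hδone, map_zero]
      have h1 := congrArg (permRep k G _ g⁻¹) (eq_neg_of_add_eq_zero_left h0)
      rw [Representation.inv_self_apply, ih, map_neg, map_sub, hρ, hρ, inv_mul_cancel,
        mul_one] at h1
      rw [h1, neg_sub]
  let s (g : G) : G := ((g : G ⧸ C).out : G)
  have hs (g : G) : (s g)⁻¹ * g ∈ C := QuotientGroup.eq.1 (QuotientGroup.out_eq' _)
  have hsC (g c : G) (hc : c ∈ C) : s (g * c) = s g := by
    simp only [s]
    rw [QuotientGroup.mk_mul_of_mem g hc]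
  let h : (G ⧸ B →₀ k) →ₗ[k] (G ⧸ E →₀ k) := Finsupp.lift _ k _ fun y =>
    permRep k G (G ⧸ E) (s y.out) (δ ((s y.out)⁻¹ * y.out))
  have hh (g : G) : h (Finsupp.single (g : G ⧸ B) 1) =
      permRep k G (G ⧸ E) (s g) (δ ((s g)⁻¹ * g)) := by
    obtain ⟨b, hb⟩ := QuotientGroup.mk_out_eq_mul B g
    simp only [h, Finsupp.lift_apply, zero_smul, Finsupp.sum_single_index, one_smul, hb]
    rw [hsC g b (hBC b.2), ← mul_assoc, hδmul _ (hs g), hδB _ b.2, map_zero, zero_add]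
  have hhα : h ∘ₗ α = LinearMap.id := by
    refine Finsupp.lhom_ext' fun x => LinearMap.ext_ring ?_
    induction x using QuotientGroup.induction_on with
    | H g =>
      change h (α (Finsupp.single _ 1)) = Finsupp.single _ 1
      rw [hα, map_sub, hh, hh, hsC g _ hvC, ← mul_assoc, hδmul _ (hs g), hδv, map_add,
        add_sub_cancel_right, hρ, hρ, mul_one, mul_inv_cancel_left]
  let σ : (G ⧸ C →₀ k) →ₗ[k] (G ⧸ B →₀ k) := Finsupp.lift _ k _ fun z =>
    Finsupp.single ((z.out : G) : G ⧸ B) 1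
  have hαh : α ∘ₗ h = LinearMap.id - σ ∘ₗ β := by
    refine Finsupp.lhom_ext' fun x => LinearMap.ext_ring ?_
    induction x using QuotientGroup.induction_on with
    | H g =>
      change α (h (Finsupp.single _ 1)) = Finsupp.single _ 1 - σ (β (Finsupp.single _ 1))
      rw [hh, hαρ', hαδ _ (hs g), map_sub, hρ, hρ, mul_inv_cancel_left, mul_one, hβ]
      simp [σ, s]
  have hβα : β ∘ₗ α = 0 := by
    refine Finsupp.lhom_ext' fun x => LinearMap.ext_ring ?_
    induction x using QuotientGroup.induction_on with
    | H g =>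
      change β (α (Finsupp.single _ 1)) = 0
      rw [hα, map_sub, hβ, hβ, QuotientGroup.mk_mul_of_mem g hvC, sub_self]
  have hβσ : β ∘ₗ σ = LinearMap.id := by
    refine Finsupp.lhom_ext' fun x => LinearMap.ext_ring ?_
    change β (σ (Finsupp.single x 1)) = Finsupp.single x 1
    simp [σ, hβ]
  refine HasFiniteHomology.of_exact (ρ₁ := permRep k S (G ⧸ E)) (ρ₂ := permRep k S (G ⧸ B))
    (ρ₃ := permRep k S (G ⧸ C)) ⟨α, fun g => hαρ g⟩ ⟨β, fun g => hβρ g⟩ ?_ ?_ ?_ hlink hdel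
  · exact Function.LeftInverse.injective (g := h) (LinearMap.congr_fun hhα)
  · exact Function.RightInverse.surjective (g := σ) (LinearMap.congr_fun hβσ)
  · refine fun y => ⟨fun hy => ⟨h y, ?_⟩, ?_⟩
    · have hy' : β y = 0 := hy
      have := LinearMap.congr_fun hαh y
      change α (h y) = y - σ (β y) at this
      rwa [hy', map_zero, sub_zero] at this
    · rintro ⟨x, rfl⟩
      exact LinearMap.congr_fun hβα x

end ArtinGroup

section KernelHomology

/-- The join of two graphs: their disjoint union together with all edges between them. -/
def graphJoin {V₁ V₂ : Type} (Γ₁ : SimpleGraph V₁) (Γ₂ : SimpleGraph V₂) :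
    SimpleGraph (V₁ ⊕ V₂) where
  Adj
    | .inl u, .inl v => Γ₁.Adj u v
    | .inr u, .inr v => Γ₂.Adj u v
    | _, _ => True
  symm := ⟨by rintro (u | u) (v | v) h <;> first | exact h.symm | trivial⟩
  loopless := ⟨by rintro (u | u) h <;> exact h.ne rfl⟩

/-- The direct product of two right-angled Artin groups is that of the join of their graphs. -/
lemma IsArtinGroup.prod {G₁ G₂ V₁ V₂ : Type} [Group G₁] [Group G₂] {Γ₁ : SimpleGraph V₁}
    {Γ₂ : SimpleGraph V₂} {ι₁ : V₁ → G₁} {ι₂ : V₂ → G₂} (h₁ : IsArtinGroup Γ₁ ι₁)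
    (h₂ : IsArtinGroup Γ₂ ι₂) :
    IsArtinGroup (G := G₁ × G₂) (graphJoin Γ₁ Γ₂)
      (Sum.elim (fun u => (ι₁ u, 1)) (fun u => (1, ι₂ u))) where
  closure_range := by
    set K := Subgroup.closure (Set.range
      (Sum.elim (fun u => (ι₁ u, (1 : G₂))) (fun u => ((1 : G₁), ι₂ u))))
    have hl : ⊤ ≤ K.comap (MonoidHom.inl G₁ G₂) := by
      rw [← h₁.closure_range, Subgroup.closure_le]
      rintro _ ⟨u, rfl⟩
      exact Subgroup.subset_closure ⟨.inl u, rfl⟩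
    have hr : ⊤ ≤ K.comap (MonoidHom.inr G₁ G₂) := by
      rw [← h₂.closure_range, Subgroup.closure_le]
      rintro _ ⟨u, rfl⟩
      exact Subgroup.subset_closure ⟨.inr u, rfl⟩
    refine (Subgroup.eq_top_iff' K).2 fun ⟨x, y⟩ => ?_
    have hx : ((x, 1) : G₁ × G₂) ∈ K := hl (Subgroup.mem_top x)
    have hy : ((1, y) : G₁ × G₂) ∈ K := hr (Subgroup.mem_top y)
    simpa using mul_mem hx hy
  commute := by
    rintro (u | u) (v | v) h
    · exact Prod.ext (h₁.commute u v h) rfl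
    · exact Prod.ext (by simp) (by simp)
    · exact Prod.ext (by simp) (by simp)
    · exact Prod.ext rfl (h₂.commute u v h)
  exists_lift H _ φ hφ := by
    obtain ⟨F₁, hF₁⟩ := h₁.exists_lift H (fun u => φ (.inl u)) fun u v h => hφ (.inl u) (.inl v) h
    obtain ⟨F₂, hF₂⟩ := h₂.exists_lift H (fun u => φ (.inr u)) fun u v h => hφ (.inr u) (.inr v) h
    have hcomm (x : G₁) (y : G₂) : Commute (F₁ x) (F₂ y) := by
      have hy : ∀ y u, Commute (F₁ (ι₁ u)) (F₂ y) := by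
        intro y u
        have : ⊤ ≤ (Subgroup.centralizer {F₁ (ι₁ u)}).comap F₂ := by
          rw [← h₂.closure_range, Subgroup.closure_le]
          rintro _ ⟨w, rfl⟩
          refine Subgroup.mem_centralizer_singleton_iff.2 ?_
          rw [hF₁, hF₂]
          exact hφ (.inr w) (.inl u) trivial
        exact (Subgroup.mem_centralizer_singleton_iff.1 (this (Subgroup.mem_top y))).symm
      have : ⊤ ≤ (Subgroup.centralizer {F₂ y}).comap F₁ := by
        rw [← h₁.closure_range, Subgroup.closure_le]
        rintro _ ⟨w, rfl⟩
        exact Subgroup.mem_centralizer_singleton_iff.2 (hy y w)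
      exact Subgroup.mem_centralizer_singleton_iff.1 (this (Subgroup.mem_top x))
    refine ⟨F₁.noncommCoprod F₂ hcomm, ?_⟩
    rintro (u | u)
    · simp [hF₁]
    · simp [hF₂]

lemma isArtinGroup_P4 :
    IsArtinGroup (G := P4) (SimpleGraph.pathGraph 4) (PresentedGroup.of (rels := p4Rels)) where
  closure_range := PresentedGroup.closure_range_of _
  commute := by
    have key (i j : Fin 4) (h : commRel i j ∈ p4Rels) :
        Commute (PresentedGroup.of i : P4) (PresentedGroup.of j) := by
      have h1 := PresentedGroup.one_of_mem h
      simp only [commRel, map_mul, map_inv] at h1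
      exact mul_inv_eq_iff_eq_mul.1 (mul_inv_eq_one.1 h1)
    have h01 := key 0 1 (by simp [p4Rels])
    have h12 := key 1 2 (by simp [p4Rels])
    have h23 := key 2 3 (by simp [p4Rels])
    intro u v huv
    rw [SimpleGraph.pathGraph_adj] at huv
    fin_cases u <;> fin_cases v <;> simp at huv <;>
      first | exact h01 | exact h12 | exact h23 | exact h01.symm | exact h12.symm | exact h23.symm
  exists_lift H _ φ hφ := by
    have key (i j : Fin 4) (h : (SimpleGraph.pathGraph 4).Adj i j) :
        FreeGroup.lift φ (commRel i j) = 1 := by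
      simp [commRel, (hφ i j h).eq]
    refine ⟨PresentedGroup.toGroup (f := φ) ?_, fun v => PresentedGroup.toGroup.of _⟩
    rintro r (rfl | rfl | rfl) <;> exact key _ _ (by simp [SimpleGraph.pathGraph_adj])

/-- If `f t` generates `ℤ`, the kernel of `f` acts freely and transitively on the cosets of the
cyclic group generated by `t`. -/
lemma hasFiniteHomology_quotient_zpowers {k G : Type} [CommRing k] [Group G]
    (f : G →* Multiplicative ℤ) (t : G) (ht : f t = Multiplicative.ofAdd (1 : ℤ)) :
    HasFiniteHomology (Rep.of (permRep k f.ker (G ⧸ Subgroup.zpowers t))) := by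
  have hpow (n : ℤ) : f (t ^ n) = Multiplicative.ofAdd n := by
    rw [map_zpow, ht, ← ofAdd_zsmul, zsmul_one, Int.cast_id]
  refine hasFiniteHomology_of_torsor ((1 : G) : G ⧸ Subgroup.zpowers t) (fun y => ?_) ?_
  · induction y using QuotientGroup.induction_on with
    | H g =>
      refine ⟨⟨g * t ^ (-(Multiplicative.toAdd (f g))), ?_⟩, ?_⟩
      · rw [MonoidHom.mem_ker, map_mul, hpow, ofAdd_neg, ofAdd_toAdd, mul_inv_cancel]
      · change ((g * t ^ (-(Multiplicative.toAdd (f g))) * 1 : G) : G ⧸ Subgroup.zpowers t) = g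
        rw [mul_one]
        exact QuotientGroup.mk_mul_of_mem g (Subgroup.zpow_mem_zpowers t _)
  · rintro ⟨g, hg⟩ h
    have h' : ((g * 1 : G) : G ⧸ Subgroup.zpowers t) = ((1 : G) : G ⧸ Subgroup.zpowers t) := h
    rw [mul_one, eq_comm, QuotientGroup.eq, inv_one, one_mul] at h'
    obtain ⟨n, rfl⟩ := Subgroup.mem_zpowers_iff.1 h'
    rw [MonoidHom.mem_ker, hpow, ofAdd_eq_one] at hg
    simp [hg]

section Join

variable {k G V₁ V₂ : Type} [CommRing k] [Group G]
  {Γ₁ : SimpleGraph V₁} {Γ₂ : SimpleGraph V₂} {ι : V₁ ⊕ V₂ → G}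

/-- The permutation representation of `S` on the cosets of the subgroup generated by the vertices
in `T₁` and `T₂` has finitely generated homology. -/
def JoinFinite (k : Type) [CommRing k] (ι : V₁ ⊕ V₂ → G) (S : Subgroup G) (T₁ : Set V₁)
    (T₂ : Set V₂) : Prop :=
  HasFiniteHomology
    (Rep.of (permRep k S (G ⧸ vertexSubgroup ι (Sum.inl '' T₁ ∪ Sum.inr '' T₂))))

variable [IsNoetherianRing k]

lemma JoinFinite.of_inl (hG : IsArtinGroup (graphJoin Γ₁ Γ₂) ι) (S : Subgroup G) {T₁ : Set V₁}
    {T₂ : Set V₂} {v : V₁} (hv : v ∈ T₁) (hlink : JoinFinite k ι S (T₁ ∩ Γ₁.neighborSet v) T₂)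
    (hdel : JoinFinite k ι S (T₁ \ {v}) T₂) : JoinFinite k ι S T₁ T₂ := by
  have hlink_eq : (Sum.inl '' T₁ ∪ Sum.inr '' T₂) ∩ (graphJoin Γ₁ Γ₂).neighborSet (.inl v) =
      Sum.inl '' (T₁ ∩ Γ₁.neighborSet v) ∪ Sum.inr '' T₂ := by
    ext (u | u) <;> simp [graphJoin]
  have hdel_eq : (Sum.inl '' T₁ ∪ Sum.inr '' T₂) \ {.inl v} =
      Sum.inl '' (T₁ \ {v}) ∪ Sum.inr '' T₂ := by
    ext (u | u) <;> simp
  refine hG.hasFiniteHomology_of_vertex S (v := .inl v) (by simp [hv]) ?_ ?_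
  · rw [hlink_eq]
    exact hlink
  · rw [hdel_eq]
    exact hdel

lemma JoinFinite.of_inr (hG : IsArtinGroup (graphJoin Γ₁ Γ₂) ι) (S : Subgroup G) {T₁ : Set V₁}
    {T₂ : Set V₂} {v : V₂} (hv : v ∈ T₂) (hlink : JoinFinite k ι S T₁ (T₂ ∩ Γ₂.neighborSet v))
    (hdel : JoinFinite k ι S T₁ (T₂ \ {v})) : JoinFinite k ι S T₁ T₂ := by
  have hlink_eq : (Sum.inl '' T₁ ∪ Sum.inr '' T₂) ∩ (graphJoin Γ₁ Γ₂).neighborSet (.inr v) =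
      Sum.inl '' T₁ ∪ Sum.inr '' (T₂ ∩ Γ₂.neighborSet v) := by
    ext (u | u) <;> simp [graphJoin]
  have hdel_eq : (Sum.inl '' T₁ ∪ Sum.inr '' T₂) \ {.inr v} =
      Sum.inl '' T₁ ∪ Sum.inr '' (T₂ \ {v}) := by
    ext (u | u) <;> simp
  refine hG.hasFiniteHomology_of_vertex S (v := .inr v) (by simp [hv]) ?_ ?_
  · rw [hlink_eq]
    exact hlink
  · rw [hdel_eq]
    exact hdel

lemma JoinFinite.singleton (hG : IsArtinGroup (graphJoin Γ₁ Γ₂) ι) (f : G →* Multiplicative ℤ)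
    {v : V₂} (hv : f (ι (.inr v)) = Multiplicative.ofAdd (1 : ℤ)) (T : Set V₁) (hT : T.Finite) :
    JoinFinite k ι f.ker T {v} := by
  induction hn : T.ncard using Nat.strong_induction_on generalizing T with
  | _ n ih =>
    subst hn
    rcases T.eq_empty_or_nonempty with rfl | ⟨u, hu⟩
    · have h : vertexSubgroup ι (Sum.inl '' ∅ ∪ Sum.inr '' {v}) =
          Subgroup.zpowers (ι (.inr v)) := by
        rw [vertexSubgroup, Subgroup.zpowers_eq_closure, Set.image_empty, Set.empty_union,
          Set.image_singleton, Set.image_singleton]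
      rw [JoinFinite, h]
      exact hasFiniteHomology_quotient_zpowers f _ hv
    · refine JoinFinite.of_inl hG f.ker hu (ih _ ?_ _ (hT.inter_of_left _) rfl)
        (ih _ ?_ _ hT.sdiff rfl)
      · exact Set.ncard_lt_ncard ⟨Set.inter_subset_left, fun h => (h hu).2.ne rfl⟩ hT
      · exact Set.ncard_sdiff_singleton_lt_of_mem hu hT

end Join

end KernelHomology

theorem homology_of_kernel_fg
    (f : P4 × P4 →* Multiplicative ℤ)
    (ha : f ((PresentedGroup.of 0 : P4), 1) = Multiplicative.ofAdd (1 : ℤ))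
    (hb : f ((PresentedGroup.of 1 : P4), 1) = Multiplicative.ofAdd (1 : ℤ))
    (hc : f ((PresentedGroup.of 2 : P4), 1) = Multiplicative.ofAdd (0 : ℤ))
    (hd : f ((PresentedGroup.of 3 : P4), 1) = Multiplicative.ofAdd (1 : ℤ))
    (ha' : f (1, (PresentedGroup.of 0 : P4)) = Multiplicative.ofAdd (1 : ℤ))
    (hb' : f (1, (PresentedGroup.of 1 : P4)) = Multiplicative.ofAdd (1 : ℤ))
    (hc' : f (1, (PresentedGroup.of 2 : P4)) = Multiplicative.ofAdd (1 : ℤ))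
    (hd' : f (1, (PresentedGroup.of 3 : P4)) = Multiplicative.ofAdd (1 : ℤ)) :
    ∀ n : ℕ, AddGroup.FG (groupHomologyZ f.ker n) := by
  have hG := isArtinGroup_P4.prod isArtinGroup_P4
  have hbase (v : Fin 4) (hv : f (1, (PresentedGroup.of v : P4)) = Multiplicative.ofAdd (1 : ℤ)) :=
    JoinFinite.singleton (k := ℤ) hG f (v := v) hv Set.univ Set.finite_univ
  have step (T T' : Set (Fin 4)) (v w : Fin 4) (hv : v ∈ T) (hdel : T \ {v} = T')
      (hlink : T ∩ (SimpleGraph.pathGraph 4).neighborSet v = {w})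
      (hw : f (1, (PresentedGroup.of w : P4)) = Multiplicative.ofAdd (1 : ℤ))
      (h : JoinFinite ℤ _ f.ker Set.univ T') : JoinFinite ℤ _ f.ker Set.univ T :=
    JoinFinite.of_inr hG f.ker hv (by rw [hlink]; exact hbase w hw) (by rw [hdel]; exact h)
  have h23 := step {2, 3} {3} 2 3 (by simp) (by ext i; fin_cases i <;> simp)
    (by ext i; fin_cases i <;> simp [SimpleGraph.pathGraph_adj]) hd' (hbase 3 hd')
  have h123 := step {1, 2, 3} {2, 3} 1 2 (by simp) (by ext i; fin_cases i <;> simp)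
    (by ext i; fin_cases i <;> simp [SimpleGraph.pathGraph_adj]) hc' h23
  have huniv := step Set.univ {1, 2, 3} 0 1 (by simp) (by ext i; fin_cases i <;> simp)
    (by ext i; fin_cases i <;> simp [SimpleGraph.pathGraph_adj]) hb' h123
  have htop : vertexSubgroup (Sum.elim (fun u => ((PresentedGroup.of u : P4), (1 : P4)))
      (fun u => ((1 : P4), (PresentedGroup.of u : P4))))
      (Sum.inl '' Set.univ ∪ Sum.inr '' Set.univ) = ⊤ := by
    rw [← hG.closure_range, vertexSubgroup, ← Set.image_univ]
    congr 2
    ext (u | u) <;> simp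
  rw [JoinFinite, htop] at huniv
  have : Subsingleton ((P4 × P4) ⧸ (⊤ : Subgroup (P4 × P4))) :=
    QuotientGroup.subsingleton_quotient_top
  exact fun n => fg_groupHomologyZ n (hasFiniteHomology_trivial huniv n)
end
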